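/- Let Λ and Γ be g-Riesz bases for H with lower frame bounds A_Λ, A_Γ and upper frame bounds B_Λ, B_Γ, let {ξ_j} be an orthonormal basis of ℓ²(⊕_i K_i), and set K := sup_j ‖U ξ_j‖. Then K √(A_Λ A_Γ) ≤ ‖M_{U,Λ,Γ}‖ ≤ √(B_Λ B_Γ) ‖U‖. -/

import Mathlib

open scoped InnerProductSpace ENNReal
open ContinuousLinearMap

/-- The adjoint of a bijective bounded operator is surjective. -/
theorem aux_adjoint_surj {E H : Type*} [NormedAddCommGroup E] [InnerProductSpace ℂ E]
    [CompleteSpace E] [NormedAddCommGroup H] [InnerProductSpace ℂ H] [CompleteSpace H]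
    (T : E →L[ℂ] H) (hT : Function.Bijective T) :
    Function.Surjective (adjoint T) := by
  intro y
  let e := ContinuousLinearEquiv.ofBijective T (LinearMap.ker_eq_bot.2 hT.1)
    (LinearMap.range_eq_top.2 hT.2)
  have he : ∀ v, (e.symm : H →L[ℂ] E) (T v) = v := fun v => e.symm_apply_apply v
  refine ⟨adjoint (e.symm : H →L[ℂ] E) y, ?_⟩
  refine ext_inner_right ℂ fun v => ?_
  rw [adjoint_inner_left, adjoint_inner_left, he]

theorem aux_sqrt_low {a x y : ℝ} (hy : 0 ≤ y) (hx : 0 ≤ x) (h : a * x ^ 2 ≤ y ^ 2) :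
    Real.sqrt a * x ≤ y := by
  have := Real.sqrt_le_sqrt h
  rwa [Real.sqrt_mul' _ (sq_nonneg x), Real.sqrt_sq hx, Real.sqrt_sq hy] at this

theorem aux_sqrt_up {b x y : ℝ} (hy : 0 ≤ y) (hx : 0 ≤ x) (h : y ^ 2 ≤ b * x ^ 2) :
    y ≤ Real.sqrt b * x := by
  have := Real.sqrt_le_sqrt h
  rwa [Real.sqrt_mul' _ (sq_nonneg x), Real.sqrt_sq hx, Real.sqrt_sq hy] at this

/-- Lower bound for the synthesis operator of a Riesz basis. -/
theorem aux_synth_low {E H : Type*} [NormedAddCommGroup E] [InnerProductSpace ℂ E]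
    [CompleteSpace E] [NormedAddCommGroup H] [InnerProductSpace ℂ H] [CompleteSpace H]
    (T : E →L[ℂ] H) (hT : Function.Bijective T) (A : ℝ)
    (h : ∀ x : H, A * ‖x‖ ^ 2 ≤ ‖adjoint T x‖ ^ 2) (y : E) :
    Real.sqrt A * ‖y‖ ≤ ‖T y‖ := by
  obtain ⟨x, rfl⟩ := aux_adjoint_surj T hT y
  set y := adjoint T x with hy
  have h1 : Real.sqrt A * ‖x‖ ≤ ‖y‖ := aux_sqrt_low (norm_nonneg _) (norm_nonneg _) (h x)
  have h2 : ‖y‖ ^ 2 ≤ ‖x‖ * ‖T y‖ := by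
    have e1 : ⟪y, y⟫_ℂ = ⟪x, T y⟫_ℂ := by
      conv_lhs => rw [hy, adjoint_inner_left]
    have e2 := norm_inner_le_norm (𝕜 := ℂ) x (T y)
    rw [← e1, inner_self_eq_norm_sq_to_K] at e2
    simpa using e2
  rcases (norm_nonneg y).eq_or_lt with h0 | h0
  · rw [← h0]; simp
  · refine le_of_mul_le_mul_right ?_ h0
    calc Real.sqrt A * ‖y‖ * ‖y‖ = Real.sqrt A * ‖y‖ ^ 2 := by ring
      _ ≤ Real.sqrt A * (‖x‖ * ‖T y‖) := by gcongr
      _ = (Real.sqrt A * ‖x‖) * ‖T y‖ := by ring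
      _ ≤ ‖y‖ * ‖T y‖ := by gcongr
      _ = ‖T y‖ * ‖y‖ := mul_comm _ _

/-- For g-Riesz bases Λ, Γ with frame bounds A_Λ ≤ B_Λ, A_Γ ≤ B_Γ,
an orthonormal basis {ξ_j} of ℓ²(⊕ K_i) and K := sup_j ‖U ξ_j‖, one has
K √(A_Λ A_Γ) ≤ ‖M_{U,Λ,Γ}‖ ≤ √(B_Λ B_Γ) ‖U‖. -/
theorem multiplier_norm_bounds
    {ι H : Type*} {K : ι → Type*} {J : Type*} [Nonempty J]
    [NormedAddCommGroup H] [InnerProductSpace ℂ H] [CompleteSpace H]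
    [∀ i, NormedAddCommGroup (K i)] [∀ i, InnerProductSpace ℂ (K i)]
    [∀ i, CompleteSpace (K i)]
    (Λ Γ : ∀ i, H →L[ℂ] K i)
    (TΛ TΓ : lp K 2 →L[ℂ] H)
    (hTΛ : ∀ x : H, ∀ i, (adjoint TΛ x) i = Λ i x)
    (hTΓ : ∀ x : H, ∀ i, (adjoint TΓ x) i = Γ i x)
    (hRieszΛ : Function.Bijective TΛ)
    (hRieszΓ : Function.Bijective TΓ)
    (AΛ BΛ AΓ BΓ : ℝ) (hAΛ : 0 < AΛ) (hAΓ : 0 < AΓ)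
    (hΛlow : ∀ x : H, AΛ * ‖x‖ ^ 2 ≤ ‖adjoint TΛ x‖ ^ 2)
    (hΛup : ∀ x : H, ‖adjoint TΛ x‖ ^ 2 ≤ BΛ * ‖x‖ ^ 2)
    (hΓlow : ∀ x : H, AΓ * ‖x‖ ^ 2 ≤ ‖adjoint TΓ x‖ ^ 2)
    (hΓup : ∀ x : H, ‖adjoint TΓ x‖ ^ 2 ≤ BΓ * ‖x‖ ^ 2)
    (ξ : HilbertBasis J ℂ (lp K 2))
    (U : lp K 2 →L[ℂ] lp K 2) :
    (⨆ j : J, ‖U (ξ j)‖) * Real.sqrt (AΛ * AΓ) ≤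
        ‖TΛ.comp (U.comp (adjoint TΓ))‖ ∧
    ‖TΛ.comp (U.comp (adjoint TΓ))‖ ≤ Real.sqrt (BΛ * BΓ) * ‖U‖ := by
  have hξ : ∀ j, ‖ξ j‖ = 1 := fun j => ξ.orthonormal.1 j
  constructor
  · rw [Real.sqrt_mul hAΛ.le]
    have hs : 0 < Real.sqrt AΛ * Real.sqrt AΓ :=
      mul_pos (Real.sqrt_pos.2 hAΛ) (Real.sqrt_pos.2 hAΓ)
    rw [← le_div_iff₀ hs]
    refine ciSup_le fun j => ?_
    rw [le_div_iff₀ hs]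
    obtain ⟨x, hx⟩ := aux_adjoint_surj TΓ hRieszΓ (ξ j)
    have h1 : Real.sqrt AΓ * ‖x‖ ≤ 1 := by
      have := aux_sqrt_low (norm_nonneg _) (norm_nonneg _) (hΓlow x)
      rwa [hx, hξ] at this
    have h2 := aux_synth_low TΛ hRieszΛ AΛ hΛlow (U (ξ j))
    have h3 : ‖TΛ (U (ξ j))‖ ≤ ‖TΛ.comp (U.comp (adjoint TΓ))‖ * ‖x‖ := by
      have := (TΛ.comp (U.comp (adjoint TΓ))).le_opNorm x
      simpa only [ContinuousLinearMap.comp_apply, hx] using this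
    set M := ‖TΛ.comp (U.comp (adjoint TΓ))‖
    have hM : 0 ≤ M := norm_nonneg _
    calc ‖U (ξ j)‖ * (Real.sqrt AΛ * Real.sqrt AΓ)
        = Real.sqrt AΓ * (Real.sqrt AΛ * ‖U (ξ j)‖) := by ring
      _ ≤ Real.sqrt AΓ * (M * ‖x‖) := 
          mul_le_mul_of_nonneg_left (h2.trans h3) (Real.sqrt_nonneg _)
      _ = M * (Real.sqrt AΓ * ‖x‖) := by ring
      _ ≤ M * 1 := by gcongr
      _ = M := mul_one M
  · have hBΛ : 0 ≤ BΛ := by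
      obtain ⟨j⟩ := ‹Nonempty J›
      obtain ⟨x, hx⟩ := aux_adjoint_surj TΛ hRieszΛ (ξ j)
      have h := hΛup x
      rw [hx, hξ] at h
      by_contra hneg
      nlinarith [sq_nonneg ‖x‖]
    have nΛ : ‖TΛ‖ ≤ Real.sqrt BΛ := by
      rw [← LinearIsometryEquiv.norm_map adjoint TΛ]
      exact opNorm_le_bound _ (Real.sqrt_nonneg _)
        fun x => aux_sqrt_up (norm_nonneg _) (norm_nonneg _) (hΛup x)
    have nΓ : ‖adjoint TΓ‖ ≤ Real.sqrt BΓ :=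
      opNorm_le_bound _ (Real.sqrt_nonneg _)
        fun x => aux_sqrt_up (norm_nonneg _) (norm_nonneg _) (hΓup x)
    rw [Real.sqrt_mul hBΛ]
    calc ‖TΛ.comp (U.comp (adjoint TΓ))‖ ≤ ‖TΛ‖ * ‖U.comp (adjoint TΓ)‖ := opNorm_comp_le _ _
      _ ≤ ‖TΛ‖ * (‖U‖ * ‖adjoint TΓ‖) := by gcongr; exact opNorm_comp_le _ _
      _ ≤ Real.sqrt BΛ * (‖U‖ * Real.sqrt BΓ) := by gcongr
      _ = Real.sqrt BΛ * Real.sqrt BΓ * ‖U‖ := by ring
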